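/- Let σ = Σ_j p_j · α_j ⊗ β_j be a separable positive semidefinite matrix on ℂ^{d} ⊗ ℂ^{d'} (a finite sum with p_j ≥ 0, α_j density matrices on ℂ^{d}, β_j density matrices on ℂ^{d'}). Then σ ≤ I_d ⊗ σ₂ in the Loewner order, where σ₂ = Tr₁(σ) is the partial trace of σ over the first tensor factor. -/

import Mathlib

open Matrix BigOperators ComplexOrder Kronecker

noncomputable section

/-- Partial trace over the first tensor factor. -/
def ptraceA {d d' : ℕ} (σ : Matrix (Fin d × Fin d') (Fin d × Fin d') ℂ) :
    Matrix (Fin d') (Fin d') ℂ :=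
  Matrix.of fun i j => ∑ a : Fin d, σ (a, i) (a, j)

/-- A positive semidefinite matrix is bounded above by its trace times the identity. -/
theorem Matrix.PosSemidef.trace_smul_one_sub {n : Type*} [Fintype n] [DecidableEq n]
    {A : Matrix n n ℂ} (hA : A.PosSemidef) :
    (A.trace • (1 : Matrix n n ℂ) - A).PosSemidef := by
  have hspec := hA.isHermitian.spectral_theorem
  rw [Unitary.conjStarAlgAut_apply] at hspec
  set U := hA.isHermitian.eigenvectorUnitary
  have hdiag : (diagonal fun i => A.trace - (hA.isHermitian.eigenvalues i : ℂ)).PosSemidef := by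
    refine PosSemidef.diagonal fun i => ?_
    rw [Pi.zero_apply, hA.isHermitian.trace_eq_sum_eigenvalues, sub_nonneg]
    exact Finset.single_le_sum (f := fun i => (hA.isHermitian.eigenvalues i : ℂ))
      (fun j _ => by exact_mod_cast hA.eigenvalues_nonneg j) (Finset.mem_univ i)
  convert hdiag.mul_mul_conjTranspose_same (U : Matrix n n ℂ) using 1
  have hsplit : (diagonal fun i => A.trace - (hA.isHermitian.eigenvalues i : ℂ)) =
      A.trace • (1 : Matrix n n ℂ) - diagonal (RCLike.ofReal ∘ hA.isHermitian.eigenvalues) := by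
    rw [smul_one_eq_diagonal, diagonal_sub]
    rfl
  have hU : (U : Matrix n n ℂ) * (U : Matrix n n ℂ)ᴴ = 1 := Unitary.mul_star_self_of_mem U.2
  rw [hsplit, mul_sub, sub_mul, Matrix.mul_smul, Matrix.smul_mul, mul_one, hU]
  congr 1

/-- The partial trace of a combination of product matrices. -/
theorem ptraceA_sum_smul_kronecker {d d' : ℕ} {J : Type*} [Fintype J] (c : J → ℂ)
    (α : J → Matrix (Fin d) (Fin d) ℂ) (β : J → Matrix (Fin d') (Fin d') ℂ) :
    ptraceA (∑ j, c j • (α j ⊗ₖ β j)) = ∑ j, c j • (α j).trace • β j := by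
  ext i k
  simp only [ptraceA, of_apply, Matrix.sum_apply, Matrix.smul_apply, kroneckerMap_apply,
    smul_eq_mul, trace, diag_apply, Finset.sum_mul, Finset.mul_sum]
  exact Finset.sum_comm

/-- a separable positive semidefinite matrix
`σ = Σ_j p_j α_j ⊗ β_j` satisfies `σ ≤ I ⊗ Tr₁(σ)` in the Loewner order. -/
theorem separable_le_id_tensor_marginal
    (d d' : ℕ) (hd : 1 ≤ d) (hd' : 1 ≤ d')
    (J : Type) [Fintype J]
    (p : J → ℝ) (hp : ∀ j, 0 ≤ p j)
    (α : J → Matrix (Fin d) (Fin d) ℂ)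
    (hα : ∀ j, (α j).PosSemidef) (hαtr : ∀ j, (α j).trace = 1)
    (β : J → Matrix (Fin d') (Fin d') ℂ)
    (hβ : ∀ j, (β j).PosSemidef) (hβtr : ∀ j, (β j).trace = 1)
    (σ : Matrix (Fin d × Fin d') (Fin d × Fin d') ℂ)
    (hσ : σ = ∑ j, ((p j : ℂ)) • ((α j) ⊗ₖ (β j))) :
    (((1 : Matrix (Fin d) (Fin d) ℂ) ⊗ₖ ptraceA σ) - σ).PosSemidef := by
  have hdiff : ((1 : Matrix (Fin d) (Fin d) ℂ) ⊗ₖ ptraceA σ) - σ =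
      ∑ j, (p j : ℂ) • (((α j).trace • (1 : Matrix (Fin d) (Fin d) ℂ) - α j) ⊗ₖ β j) := by
    rw [hσ, ptraceA_sum_smul_kronecker]
    ext x y
    simp only [hαtr, one_smul, Matrix.sub_apply, Matrix.sum_apply, Matrix.smul_apply,
      kroneckerMap_apply, smul_eq_mul, Finset.mul_sum, ← Finset.sum_sub_distrib]
    exact Finset.sum_congr rfl fun j _ => by ring
  rw [hdiff]
  exact posSemidef_sum _ fun j _ =>
    ((hα j).trace_smul_one_sub.kronecker (hβ j)).smul (by exact_mod_cast hp j)

end
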